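/- arXiv:2201.04838 — 8 statements merged into one kernel-verified Lean document; each statement's English description precedes it below -/
import Mathlib

section
/- Euclid, Elements I, Proposition 7 (uniqueness of a triangle on a given base on a given side): let A and B be distinct points of the Euclidean plane, and let C and D be points lying strictly on the same side of the line through A and B. If dist A C = dist A D and dist B C = dist B D, then C = D. -/
/-!
The points equidistant from two distinct points `C` and `D` form their perpendicular bisector, a
proper affine subspace. A hyperplane contained in it must therefore be equal to it, and so contains
the midpoint of `C` and `D`; thus `C` and `D` are not strictly on the same side of the hyperplane.
In the plane, the line through two distinct points is a hyperplane.
-/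

open EuclideanGeometry Affine

section Hyperplane

variable {k V P : Type*} [AddCommGroup V] [AddTorsor V P]

theorem isCoatom_affineSubspace_of_isCoatom_direction [Ring k] [Module k V]
    {s : AffineSubspace k P} (hne : (s : Set P).Nonempty) (hdir : IsCoatom s.direction) :
    IsCoatom s := by
  refine ⟨fun htop ↦ hdir.ne_top (by rw [htop, AffineSubspace.direction_top]), fun t hst ↦ ?_⟩
  have hdir_t : t.direction = ⊤ := hdir.2 _ (AffineSubspace.direction_lt_of_nonempty hst hne)
  exact (AffineSubspace.direction_eq_top_iff_of_nonempty (hne.mono hst.le)).1 hdir_t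

variable [DivisionRing k] [Module k V]

theorem isCoatom_submodule_of_finrank_add_one_eq {W : Submodule k V}
    (hW : Module.finrank k W + 1 = Module.finrank k V) : IsCoatom W := by
  have : FiniteDimensional k V := Module.finite_of_finrank_pos (by lia)
  refine ⟨fun htop ↦ ?_, fun U hWU ↦ Submodule.eq_top_of_finrank_eq ?_⟩
  · rw [htop, finrank_top] at hW
    lia
  · have hlt : Module.finrank k W < Module.finrank k U := Submodule.finrank_lt_finrank_of_lt hWU
    have hle : Module.finrank k U ≤ Module.finrank k V := U.finrank_le
    lia

theorem isCoatom_affineSpan_pair_of_finrank_eq_two (hV : Module.finrank k V = 2) {A B : P}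
    (hAB : A ≠ B) : IsCoatom line[k, A, B] := by
  refine isCoatom_affineSubspace_of_isCoatom_direction ⟨A, left_mem_affineSpan_pair k A B⟩
    (isCoatom_submodule_of_finrank_add_one_eq ?_)
  rw [direction_affineSpan, vectorSpan_pair, finrank_span_singleton (vsub_ne_zero.2 hAB), hV]

end Hyperplane

theorem euclid_I_7_general {V P : Type*} [NormedAddCommGroup V] [InnerProductSpace ℝ V]
    [MetricSpace P] [NormedAddTorsor V P] {S : Set P} (hS : IsCoatom (affineSpan ℝ S)) {C D : P}
    (hside : (affineSpan ℝ S).SSameSide C D) (hdist : ∀ p ∈ S, dist p C = dist p D) : C = D := by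
  by_contra hCD
  have hle : affineSpan ℝ S ≤ AffineSubspace.perpBisector C D :=
    affineSpan_le.2 fun p hp ↦ AffineSubspace.mem_perpBisector_iff_dist_eq.2 (hdist p hp)
  have heq : AffineSubspace.perpBisector C D = affineSpan ℝ S :=
    (hS.le_iff_eq (mt AffineSubspace.perpBisector_eq_top.1 hCD)).1 hle
  have hmid : midpoint ℝ C D ∈ affineSpan ℝ S :=
    heq ▸ AffineSubspace.midpoint_mem_perpBisector C D
  exact hside.not_wOppSide ((wbtw_midpoint ℝ C D).wOppSide₁₃ hmid)

theorem euclid_I_7 (A B C D : EuclideanSpace ℝ (Fin 2)) (hAB : A ≠ B)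
    (hside : (affineSpan ℝ ({A, B} : Set (EuclideanSpace ℝ (Fin 2)))).SSameSide C D)
    (h1 : dist A C = dist A D) (h2 : dist B C = dist B D) :
    C = D :=
  euclid_I_7_general (isCoatom_affineSpan_pair_of_finrank_eq_two finrank_euclideanSpace_fin hAB)
    hside (by simp [h1, h2])
end

section
/- Euclid, Elements I, Proposition 9 (bisection of an angle): if A, B, C are points of the Euclidean plane that are not collinear, then there exists a point D ≠ A such that ∠ B A D = ∠ C A D and ∠ B A C = ∠ B A D + ∠ D A C. -/
open EuclideanGeometry

/-!
Two vectors of the same length span a rhombus, whose diagonal makes equal angles with its sides: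
cutting along the diagonal gives two isosceles triangles. Hence the angle between `x` and `y` is
bisected by the sum of the unit vectors along `x` and `y`, and this sum vanishes only when `x` and
`y` point in opposite directions.
-/

section BisectingVector

open InnerProductGeometry NormedSpace
open scoped Real

variable {V : Type*} [NormedAddCommGroup V] [InnerProductSpace ℝ V] {x y : V}

theorem angle_add_eq_angle_add_of_norm_eq (h : ‖x‖ = ‖y‖) :
    InnerProductGeometry.angle x (x + y) = InnerProductGeometry.angle y (x + y) :=
  calc
    InnerProductGeometry.angle x (x + y) = InnerProductGeometry.angle x (x - -y) := by
      rw [sub_neg_eq_add]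
    _ = InnerProductGeometry.angle (-y) (-y - x) :=
      angle_sub_eq_angle_sub_rev_of_norm_eq (by rwa [norm_neg])
    _ = InnerProductGeometry.angle y (x + y) := by rw [← neg_add', angle_neg_neg, add_comm]

theorem add_ne_zero_of_angle_ne_pi (hx : x ≠ 0) (hxy : InnerProductGeometry.angle x y ≠ π) :
    x + y ≠ 0 := by
  contrapose! hxy
  rw [← neg_eq_of_add_eq_zero_right hxy]
  exact angle_self_neg_of_nonzero hx

theorem exists_bisecting_vector (hx : x ≠ 0) (hy : y ≠ 0)
    (hxy : InnerProductGeometry.angle x y ≠ π) :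
    ∃ z : V, z ≠ 0 ∧ InnerProductGeometry.angle x z = InnerProductGeometry.angle y z ∧
      InnerProductGeometry.angle x y =
        InnerProductGeometry.angle x z + InnerProductGeometry.angle z y := by
  have norm_eq : ‖normalize x‖ = ‖normalize y‖ := by
    rw [norm_normalize_eq_one_iff.mpr hx, norm_normalize_eq_one_iff.mpr hy]
  have normalize_x_ne : normalize x ≠ 0 := mt (normalize_eq_zero_iff _).mp hx
  have normalize_y_ne : normalize y ≠ 0 := mt (normalize_eq_zero_iff _).mp hy
  refine ⟨normalize x + normalize y, add_ne_zero_of_angle_ne_pi normalize_x_ne ?_, ?_, ?_⟩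
  · simpa only [angle_normalize_left, angle_normalize_right] using hxy
  · simpa only [angle_normalize_left] using angle_add_eq_angle_add_of_norm_eq norm_eq
  · rw [InnerProductGeometry.angle_comm (_ + _) y]
    simpa only [angle_normalize_left, angle_normalize_right] using
      angle_eq_angle_add_add_angle_add (normalize x) normalize_y_ne

end BisectingVector

theorem euclid_I_9_general {V P : Type*} [NormedAddCommGroup V] [InnerProductSpace ℝ V]
    [MetricSpace P] [NormedAddTorsor V P] {A B C : P} (hBA : B ≠ A) (hCA : C ≠ A)
    (hBAC : ∠ B A C ≠ Real.pi) :
    ∃ D : P, D ≠ A ∧ ∠ B A D = ∠ C A D ∧ ∠ B A C = ∠ B A D + ∠ D A C := by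
  obtain ⟨z, z_ne, angle_eq, angle_eq_add⟩ :=
    exists_bisecting_vector (vsub_ne_zero.mpr hBA) (vsub_ne_zero.mpr hCA) hBAC
  refine ⟨z +ᵥ A, by rwa [← vsub_ne_zero, vadd_vsub], ?_, ?_⟩
  · simpa only [angle, vadd_vsub] using angle_eq
  · simpa only [angle, vadd_vsub] using angle_eq_add

theorem euclid_I_9 (A B C : EuclideanSpace ℝ (Fin 2))
    (hnc : ¬ Collinear ℝ ({A, B, C} : Set (EuclideanSpace ℝ (Fin 2)))) :
    ∃ D : EuclideanSpace ℝ (Fin 2), D ≠ A ∧ ∠ B A D = ∠ C A D ∧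
      ∠ B A C = ∠ B A D + ∠ D A C := by
  refine euclid_I_9_general (ne₁₂_of_not_collinear hnc).symm (ne₁₃_of_not_collinear hnc).symm ?_
  exact fun h => hnc (Set.insert_comm A B {C} ▸ collinear_of_angle_eq_pi h)
end

section
/- Euclid, Elements I, Proposition 14: let A and B be distinct points of the Euclidean plane and let C and D be points lying strictly on opposite sides of the line through A and B. If ∠ A B C + ∠ A B D = π, then B lies strictly between C and D (in particular C, B, D are collinear). -/
open EuclideanGeometry

/-!
The line `AB` meets the segment `CD` at an interior point `X`. If `X = B`, there is nothing to
prove. Otherwise replacing `A` by `X` either preserves both angles `∠ A B C` and `∠ A B D`, when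
`X` lies on the ray `BA`, or turns both into their supplements, when it lies on the opposite ray;
in either case their sum is still two right angles. Since `X` lies between `C` and `D`, this sum is
also `∠ C B D`, which is therefore straight.
-/

section

variable {V P : Type*} [NormedAddCommGroup V] [InnerProductSpace ℝ V] [MetricSpace P]
  [NormedAddTorsor V P]

theorem angle_smul_left_add_angle_smul_left_eq_pi_iff {r : ℝ} (hr : r ≠ 0) (x y z : V) :
    InnerProductGeometry.angle (r • x) y + InnerProductGeometry.angle (r • x) z = Real.pi ↔
      InnerProductGeometry.angle x y + InnerProductGeometry.angle x z = Real.pi := by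
  rcases hr.lt_or_gt with hneg | hpos
  · simp only [InnerProductGeometry.angle_smul_left_of_neg _ _ hneg,
      InnerProductGeometry.angle_neg_left]
    constructor <;> intro h <;> linarith
  · simp only [InnerProductGeometry.angle_smul_left_of_pos _ _ hpos]

theorem angle_add_angle_eq_pi_iff_of_mem_affineSpan_pair {a b x : P} (hx : x ∈ line[ℝ, a, b])
    (hxb : x ≠ b) (c d : P) : ∠ x b c + ∠ x b d = Real.pi ↔ ∠ a b c + ∠ a b d = Real.pi := by
  obtain ⟨r, rfl⟩ := mem_affineSpan_pair_iff_exists_lineMap_rev_eq.1 hx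
  have hr : r ≠ 0 := by
    rintro rfl
    exact hxb (AffineMap.lineMap_apply_zero b a)
  simpa only [angle, AffineMap.lineMap_vsub_left] using
    angle_smul_left_add_angle_smul_left_eq_pi_iff hr (a -ᵥ b) (c -ᵥ b) (d -ᵥ b)

theorem euclid_I_14_general {a b c d : P} (hside : line[ℝ, a, b].SOppSide c d)
    (hangle : ∠ a b c + ∠ a b d = Real.pi) : Sbtw ℝ c b d := by
  obtain ⟨x, hx, hcxd⟩ := hside.exists_sbtw
  rcases eq_or_ne x b with rfl | hxb
  · exact hcxd
  rw [← angle_eq_pi_iff_sbtw]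
  calc ∠ c b d = ∠ c b x + ∠ x b d := (angle_add_angle_eq_of_sbtw hcxd).symm
    _ = ∠ x b c + ∠ x b d := by rw [angle_comm c b x]
    _ = Real.pi := (angle_add_angle_eq_pi_iff_of_mem_affineSpan_pair hx hxb c d).2 hangle

end

theorem euclid_I_14 (A B C D : EuclideanSpace ℝ (Fin 2)) (hAB : A ≠ B)
    (hside : (affineSpan ℝ ({A, B} : Set (EuclideanSpace ℝ (Fin 2)))).SOppSide C D)
    (hangle : ∠ A B C + ∠ A B D = Real.pi) :
    Sbtw ℝ C B D :=
  euclid_I_14_general hside hangle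
end

section
/- Euclid, Elements I, Proposition 16 (exterior angle theorem): let A, B, C be points of the Euclidean plane that are not collinear, and let D be a point such that C lies strictly between B and D. Then the exterior angle ∠ A C D is strictly greater than ∠ B A C and strictly greater than ∠ A B C. -/
open EuclideanGeometry

theorem euclid_I_16_general {V P : Type*} [NormedAddCommGroup V] [InnerProductSpace ℝ V]
    [MetricSpace P] [NormedAddTorsor V P] {A B C D : P}
    (hnc : ¬ Collinear ℝ ({A, B, C} : Set P)) (hD : Sbtw ℝ B C D) :
    ∠ B A C < ∠ A C D ∧ ∠ A B C < ∠ A C D := by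
  have exterior_eq : ∠ A C D = ∠ B A C + ∠ A B C := by
    rw [exterior_angle_eq_angle_add_angle D hD.symm, angle_comm C A B]
  have angle_A_pos : 0 < ∠ B A C := angle_pos_of_not_collinear (by rwa [Set.insert_comm])
  have angle_B_pos : 0 < ∠ A B C := angle_pos_of_not_collinear hnc
  rw [exterior_eq]
  exact ⟨lt_add_of_pos_right _ angle_B_pos, lt_add_of_pos_left _ angle_A_pos⟩

theorem euclid_I_16 (A B C D : EuclideanSpace ℝ (Fin 2))
    (hnc : ¬ Collinear ℝ ({A, B, C} : Set (EuclideanSpace ℝ (Fin 2))))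
    (hD : Sbtw ℝ B C D) :
    ∠ B A C < ∠ A C D ∧ ∠ A B C < ∠ A C D :=
  euclid_I_16_general hnc hD
end

section
/- Euclid, Elements I, Proposition 27 (equal alternate angles imply parallelism): let B and C be distinct points of the Euclidean plane and let A and D be points lying strictly on opposite sides of the line through B and C. If the alternate angles satisfy ∠ A B C = ∠ D C B, then the line through A and B is parallel to the line through C and D. -/
open EuclideanGeometry

/-!
Since `A` and `D` lie on opposite sides of the transversal `BC`, the vector `A -ᵥ B`, some positive
multiple of `C -ᵥ D` and a multiple of `C -ᵥ B` close up to a triangle, degenerate exactly when `BA`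
and `CD` are parallel. If it is not degenerate, one of the two alternate angles is an exterior angle
of this triangle and the other one is a remote interior angle, hence strictly smaller
(Elements I.16).
-/

open scoped Affine

section VectorAngle

variable {V : Type*} [NormedAddCommGroup V] [InnerProductSpace ℝ V] {x y : V}

lemma angle_pos_of_linearIndependent (h : LinearIndependent ℝ ![x, y]) :
    0 < InnerProductGeometry.angle x y := by
  refine (InnerProductGeometry.angle_nonneg x y).lt_of_ne' fun h_angle => ?_
  obtain ⟨hx, r, -, hy⟩ := InnerProductGeometry.angle_eq_zero_iff.mp h_angle
  exact (LinearIndependent.pair_iff' hx).mp h r hy.symm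

lemma angle_add_left_lt_angle (h : LinearIndependent ℝ ![x, y]) :
    InnerProductGeometry.angle (x + y) y < InnerProductGeometry.angle x y := by
  have hy : y ≠ 0 := h.ne_zero 1
  have h_apex : 0 < InnerProductGeometry.angle x (x + y) :=
    angle_pos_of_linearIndependent (by simpa [add_comm] using h)
  rw [InnerProductGeometry.angle_eq_angle_add_add_angle_add x hy,
    InnerProductGeometry.angle_comm y]
  exact lt_add_of_pos_left _ h_apex

lemma strictAnti_angle_add_smul_left (h : LinearIndependent ℝ ![x, y]) :
    StrictAnti fun t : ℝ => InnerProductGeometry.angle (x + t • y) y := by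
  intro s t hst
  have hts : 0 < t - s := sub_pos.mpr hst
  have h_indep : LinearIndependent ℝ ![x + s • y, (t - s) • y] := by
    simpa using (LinearIndependent.pair_add_smul_add_smul_iff 1 s 0 (t - s)).mpr
      ⟨h, by simpa using hts.ne'⟩
  calc
    InnerProductGeometry.angle (x + t • y) y
        = InnerProductGeometry.angle (x + s • y + (t - s) • y) ((t - s) • y) := by
      rw [InnerProductGeometry.angle_smul_right_of_pos _ _ hts]
      congr 1
      module
    _ < InnerProductGeometry.angle (x + s • y) ((t - s) • y) := angle_add_left_lt_angle h_indep
    _ = InnerProductGeometry.angle (x + s • y) y :=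
      InnerProductGeometry.angle_smul_right_of_pos _ _ hts

lemma angle_add_smul_left_eq_angle_iff (h : LinearIndependent ℝ ![x, y]) {t : ℝ} :
    InnerProductGeometry.angle (x + t • y) y = InnerProductGeometry.angle x y ↔ t = 0 := by
  simpa only [zero_smul, add_zero] using
    (strictAnti_angle_add_smul_left h).injective.eq_iff (a := t) (b := 0)

end VectorAngle

section AffineLine

variable {k V P : Type*} [AddCommGroup V] [AddTorsor V P]

lemma linearIndependent_vsub_vsub_iff_notMem_affineSpan_pair [DivisionRing k] [Module k V]
    {p q r : P} (hqr : q ≠ r) : LinearIndependent k ![p -ᵥ q, r -ᵥ q] ↔ p ∉ line[k, q, r] := by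
  rw [LinearIndependent.pair_symm_iff, LinearIndependent.pair_iff' (vsub_ne_zero.mpr hqr.symm),
    ← AffineSubspace.vsub_right_mem_direction_iff_mem (left_mem_affineSpan_pair k q r),
    direction_affineSpan, mem_vectorSpan_pair_rev, not_exists]

lemma exists_pos_vsub_add_smul_vsub_mem_direction [Field k] [LinearOrder k]
    [IsStrictOrderedRing k] [Module k V] {s : AffineSubspace k P} {a b p q : P}
    (h : s.SOppSide a b) (hp : p ∈ s) (hq : q ∈ s) :
    ∃ r : k, 0 < r ∧ (a -ᵥ p) + r • (b -ᵥ q) ∈ s.direction := by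
  obtain ⟨ha, hb, c, hc, h_ray⟩ := (AffineSubspace.sOppSide_iff_exists_left hp).mp h
  have hap : a -ᵥ p ≠ 0 := vsub_ne_zero.mpr (ne_of_mem_of_not_mem hp ha).symm
  have hcb : c -ᵥ b ≠ 0 := vsub_ne_zero.mpr (ne_of_mem_of_not_mem hc hb)
  obtain ⟨r, hr, h_smul⟩ := h_ray.exists_pos_right hap hcb
  refine ⟨r, hr, ?_⟩
  rw [h_smul, ← smul_add, vsub_add_vsub_cancel]
  exact s.direction.smul_mem r (AffineSubspace.vsub_mem_direction hc hq)

end AffineLine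

section AlternateAngles

variable {V P : Type*} [NormedAddCommGroup V] [InnerProductSpace ℝ V] [MetricSpace P]
  [NormedAddTorsor V P]

lemma angle_eq_angle_vsub_rev (p q r : P) :
    ∠ p q r = InnerProductGeometry.angle (q -ᵥ p) (q -ᵥ r) := by
  rw [EuclideanGeometry.angle, ← InnerProductGeometry.angle_neg_neg, neg_vsub_eq_vsub_rev,
    neg_vsub_eq_vsub_rev]

theorem euclid_I_27_general {A B C D : P} (hBC : B ≠ C)
    (hside : line[ℝ, B, C].SOppSide A D) (hangle : ∠ A B C = ∠ D C B) :
    line[ℝ, A, B] ∥ line[ℝ, C, D] := by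
  have h_indep : LinearIndependent ℝ ![A -ᵥ B, C -ᵥ B] :=
    (linearIndependent_vsub_vsub_iff_notMem_affineSpan_pair hBC).mpr hside.left_notMem
  obtain ⟨r, hr, h_mem⟩ := exists_pos_vsub_add_smul_vsub_mem_direction hside
    (left_mem_affineSpan_pair ℝ B C) (right_mem_affineSpan_pair ℝ B C)
  obtain ⟨t, ht⟩ : ∃ t : ℝ, t • (C -ᵥ B) = (A -ᵥ B) + r • (D -ᵥ C) := by
    rwa [direction_affineSpan, mem_vectorSpan_pair_rev] at h_mem
  have h_triangle : (A -ᵥ B) + (-t) • (C -ᵥ B) = r • (C -ᵥ D) := by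
    rw [neg_smul, ht, ← neg_vsub_eq_vsub_rev D C]
    module
  have h_angle : InnerProductGeometry.angle ((A -ᵥ B) + (-t) • (C -ᵥ B)) (C -ᵥ B) =
      InnerProductGeometry.angle (A -ᵥ B) (C -ᵥ B) := by
    rw [h_triangle, InnerProductGeometry.angle_smul_left_of_pos _ _ hr,
      ← angle_eq_angle_vsub_rev, ← hangle, EuclideanGeometry.angle]
  have h_degenerate : -t = 0 := (angle_add_smul_left_eq_angle_iff h_indep).mp h_angle
  have h_parallel : r • (D -ᵥ C) = B -ᵥ A := by
    rw [h_degenerate, zero_smul, add_zero] at h_triangle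
    rw [← neg_vsub_eq_vsub_rev C D, smul_neg, ← h_triangle, neg_vsub_eq_vsub_rev]
  exact AffineSubspace.affineSpan_pair_parallel_iff_exists_unit_smul.mpr
    ⟨Units.mk0 r hr.ne', h_parallel⟩

end AlternateAngles

theorem euclid_I_27 (A B C D : EuclideanSpace ℝ (Fin 2)) (hBC : B ≠ C)
    (hside : (affineSpan ℝ ({B, C} : Set (EuclideanSpace ℝ (Fin 2)))).SOppSide A D)
    (hangle : ∠ A B C = ∠ D C B) :
    (affineSpan ℝ ({A, B} : Set (EuclideanSpace ℝ (Fin 2)))).Parallel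
      (affineSpan ℝ ({C, D} : Set (EuclideanSpace ℝ (Fin 2)))) := by
  exact euclid_I_27_general hBC hside hangle
end

section
/- Euclid's fifth postulate, proved as a theorem in the Euclidean plane: let B and C be distinct points of the Euclidean plane and let A and D be points lying strictly on the same side of the line through B and C. If the interior angles satisfy ∠ A B C + ∠ B C D < π, then the line through A and B and the line through C and D meet, i.e. there exists a point P belonging to both lines. -/
open EuclideanGeometry

/-!
Since `A` and `D` lie on the same side of `BC`, we can write `D - C = r (A - B) + s (B - C)` with
`r > 0`. If `s = 0`, the rays `BA` and `CD` have the same direction and the interior angles add up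
to `π`. Otherwise dividing by `s` shows that `C + s⁻¹ (D - C) = B + (r / s) (A - B)`, a common
point of the two lines.
-/

section Affine

variable {k V P : Type*} [Field k] [AddCommGroup V] [Module k V] [AddTorsor V P] {A B C D : P}

theorem exists_mem_affineSpan_pair_of_vsub_eq_smul_add_smul {r s : k} (hs : s ≠ 0)
    (h : D -ᵥ C = r • (A -ᵥ B) + s • (B -ᵥ C)) :
    ∃ p, p ∈ line[k, A, B] ∧ p ∈ line[k, C, D] := by
  have h_meet : (s⁻¹ * r) • (A -ᵥ B) +ᵥ B = s⁻¹ • (D -ᵥ C) +ᵥ C := by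
    rw [h, smul_add, smul_smul, inv_smul_smul₀ hs, add_vadd, vsub_vadd]
  exact ⟨_, smul_vsub_rev_vadd_mem_affineSpan_pair _ A B,
    h_meet ▸ smul_vsub_vadd_mem_affineSpan_pair _ C D⟩

theorem exists_pos_vsub_eq_smul_add_smul_of_sSameSide [LinearOrder k] [IsStrictOrderedRing k]
    (h : line[k, B, C].SSameSide A D) :
    ∃ r s : k, 0 < r ∧ D -ᵥ C = r • (A -ᵥ B) + s • (B -ᵥ C) := by
  have hD : D ∈ {y | line[k, B, C].SSameSide A y} := h
  rw [AffineSubspace.setOfPred_sSameSide_eq_image2 h.left_notMem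
    (left_mem_affineSpan_pair k B C)] at hD
  obtain ⟨r, hr, q, hq, rfl⟩ := hD
  obtain ⟨s, rfl⟩ := mem_affineSpan_pair_iff_exists_lineMap_rev_eq.1 hq
  exact ⟨r, s, hr, by rw [vadd_vsub_assoc, AffineMap.lineMap_vsub_left]⟩

end Affine

section Euclidean

variable {V P : Type*} [NormedAddCommGroup V] [InnerProductSpace ℝ V] [MetricSpace P]
  [NormedAddTorsor V P] {A B C D : P}

theorem angle_add_angle_eq_pi_of_vsub_eq_pos_smul {r : ℝ} (hr : 0 < r)
    (h : D -ᵥ C = r • (A -ᵥ B)) : ∠ A B C + ∠ B C D = Real.pi := by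
  have h_angle : ∠ B C D = Real.pi - ∠ A B C := by
    rw [angle, angle, h, InnerProductGeometry.angle_smul_right_of_pos _ _ hr,
      ← neg_vsub_eq_vsub_rev C B, InnerProductGeometry.angle_neg_left,
      InnerProductGeometry.angle_comm]
  rw [h_angle, add_sub_cancel]

theorem euclid_postulate_5_general (hside : line[ℝ, B, C].SSameSide A D)
    (hangle : ∠ A B C + ∠ B C D ≠ Real.pi) :
    ∃ p, p ∈ line[ℝ, A, B] ∧ p ∈ line[ℝ, C, D] := by
  obtain ⟨r, s, hr, h⟩ := exists_pos_vsub_eq_smul_add_smul_of_sSameSide hside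
  have hs : s ≠ 0 := by
    rintro rfl
    rw [zero_smul, add_zero] at h
    exact hangle (angle_add_angle_eq_pi_of_vsub_eq_pos_smul hr h)
  exact exists_mem_affineSpan_pair_of_vsub_eq_smul_add_smul hs h

end Euclidean

theorem euclid_postulate_5 (A B C D : EuclideanSpace ℝ (Fin 2)) (hBC : B ≠ C)
    (hside : (affineSpan ℝ ({B, C} : Set (EuclideanSpace ℝ (Fin 2)))).SSameSide A D)
    (hangle : ∠ A B C + ∠ B C D < Real.pi) :
    ∃ P : EuclideanSpace ℝ (Fin 2),
      P ∈ affineSpan ℝ ({A, B} : Set (EuclideanSpace ℝ (Fin 2))) ∧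
      P ∈ affineSpan ℝ ({C, D} : Set (EuclideanSpace ℝ (Fin 2))) :=
  euclid_postulate_5_general hside hangle.ne
end

section
/- Euclid, Elements I, Proposition 29 (a transversal of parallel lines makes equal alternate angles): let B and C be distinct points of the Euclidean plane and let A and D be points lying strictly on opposite sides of the line through B and C. If the line through A and B is parallel to the line through C and D, then ∠ A B C = ∠ D C B. -/
open EuclideanGeometry

/-!
Since the lines `AB` and `CD` are parallel, the vector from `C` to `D` is a multiple of the vector
from `B` to `A`; since `A` and `D` lie on opposite sides of the line `BC`, the factor is negative.
Hence the rays `CD` and `CB` have the directions opposite to the rays `BA` and `BC`, and reversing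
both arms of an angle preserves it.
-/

section Affine

variable {R V P : Type*} [AddCommGroup V] [AddTorsor V P]

theorem exists_vsub_eq_smul_vsub_of_parallel [Ring R] [Module R V] {A B C D : P}
    (hpar : (affineSpan R {A, B}).Parallel (affineSpan R {C, D})) :
    ∃ r : R, D -ᵥ C = r • (A -ᵥ B) := by
  have hmem : D -ᵥ C ∈ vectorSpan R {A, B} := by
    rw [hpar.vectorSpan_eq]
    exact vsub_rev_mem_vectorSpan_pair R C D
  obtain ⟨r, hr⟩ := mem_vectorSpan_pair.1 hmem
  exact ⟨r, hr.symm⟩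

theorem neg_of_sOppSide_of_vsub_eq_smul_vsub [Field R] [LinearOrder R] [IsStrictOrderedRing R]
    [Module R V] {s : AffineSubspace R P} {x y p q : P} {r : R} (hside : s.SOppSide x y)
    (hp : p ∈ s) (hq : q ∈ s) (hr : y -ᵥ q = r • (x -ᵥ p)) : r < 0 := by
  by_contra! hnonneg
  have hsame : s.WSameSide y x := by
    rw [← vsub_vadd y q, hr]
    exact AffineSubspace.wSameSide_smul_vsub_vadd_left x hp hq hnonneg
  exact hside.not_wSameSide hsame.symm

end Affine

section Angle

variable {V P : Type*} [NormedAddCommGroup V] [InnerProductSpace ℝ V] [MetricSpace P]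
  [NormedAddTorsor V P]

theorem angle_eq_angle_of_vsub_eq_smul_vsub_of_neg {A B C D : P} {r : ℝ} (hr : r < 0)
    (hvsub : D -ᵥ C = r • (A -ᵥ B)) : ∠ A B C = ∠ D C B := by
  symm
  calc
    InnerProductGeometry.angle (D -ᵥ C) (B -ᵥ C)
        = InnerProductGeometry.angle (-(A -ᵥ B)) (-(C -ᵥ B)) := by
      rw [hvsub, InnerProductGeometry.angle_smul_left_of_neg _ _ hr, neg_vsub_eq_vsub_rev C B]
    _ = InnerProductGeometry.angle (A -ᵥ B) (C -ᵥ B) :=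
      InnerProductGeometry.angle_neg_neg _ _

theorem euclid_I_29_general {A B C D : P} (_hBC : B ≠ C)
    (hside : (affineSpan ℝ {B, C}).SOppSide A D)
    (hpar : (affineSpan ℝ {A, B}).Parallel (affineSpan ℝ {C, D})) :
    ∠ A B C = ∠ D C B := by
  obtain ⟨r, hr⟩ := exists_vsub_eq_smul_vsub_of_parallel hpar
  have hneg : r < 0 := neg_of_sOppSide_of_vsub_eq_smul_vsub hside
    (left_mem_affineSpan_pair ℝ B C) (right_mem_affineSpan_pair ℝ B C) hr
  exact angle_eq_angle_of_vsub_eq_smul_vsub_of_neg hneg hr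

end Angle

theorem euclid_I_29 (A B C D : EuclideanSpace ℝ (Fin 2)) (hBC : B ≠ C)
    (hside : (affineSpan ℝ ({B, C} : Set (EuclideanSpace ℝ (Fin 2)))).SOppSide A D)
    (hpar : (affineSpan ℝ ({A, B} : Set (EuclideanSpace ℝ (Fin 2)))).Parallel
      (affineSpan ℝ ({C, D} : Set (EuclideanSpace ℝ (Fin 2))))) :
    ∠ A B C = ∠ D C B :=
  euclid_I_29_general hBC hside hpar
end

section
/- Euclid, Elements I, Proposition 42 (to construct in a given angle a parallelogram equal to a given triangle): let A, B, C be points of the Euclidean plane that are not collinear and let θ be a real number with 0 < θ < π. Then there exist points P, Q, S of the plane, not collinear, such that ∠ Q P S = θ and the parallelogram with vertices P, Q, Q + (S − P), S has the same area as the triangle A B C: volume (convexHull ℝ {P, Q, Q + (S − P), S}) = volume (convexHull ℝ {A, B, C}). -/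
open EuclideanGeometry MeasureTheory

/-!
A homothety of ratio `r` preserves angles and multiplies areas in the plane by `r ^ 2`. So it is
enough to place the angle `θ` at a point, complete its two sides to a parallelogram, and rescale
the figure from that point until it has the prescribed area.
-/

open AffineMap (homothety homothety_injective homothety_apply_same)
open Module (finrank)
open scoped ENNReal

section Angle

variable {V : Type*} [NormedAddCommGroup V] [InnerProductSpace ℝ V]

theorem exists_ne_zero_angle_eq (hV : 1 < Module.rank ℝ V) {x : V} (hx : x ≠ 0) {θ : ℝ}
    (hθ : θ ∈ Set.Icc 0 Real.pi) : ∃ y ≠ 0, InnerProductGeometry.angle x y = θ := by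
  have hcont : ContinuousOn (InnerProductGeometry.angle x) {0}ᶜ := fun y hy ↦
    ((InnerProductGeometry.continuousAt_angle (x := (x, y)) hx hy).comp
      (by fun_prop : ContinuousAt (fun z ↦ (x, z)) y)).continuousWithinAt
  rw [← InnerProductGeometry.angle_self hx,
    ← InnerProductGeometry.angle_self_neg_of_nonzero hx] at hθ
  exact (isConnected_compl_singleton_of_one_lt_rank hV 0).isPreconnected.intermediate_value
    hx (neg_ne_zero.mpr hx) hcont hθ

variable {P : Type*} [MetricSpace P] [NormedAddTorsor V P]

theorem exists_not_collinear_angle_eq (hV : 1 < Module.rank ℝ V) {p q : P} (hqp : q ≠ p) {θ : ℝ}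
    (hθ : θ ∈ Set.Ioo 0 Real.pi) : ∃ s : P, ¬ Collinear ℝ {p, q, s} ∧ ∠ q p s = θ := by
  obtain ⟨y, hy, hangle⟩ :=
    exists_ne_zero_angle_eq hV (vsub_ne_zero.mpr hqp) (Set.Ioo_subset_Icc_self hθ)
  replace hangle : ∠ q p (y +ᵥ p) = θ := by rwa [angle, vadd_vsub]
  have hsp : y +ᵥ p ≠ p := by rwa [← vsub_ne_zero, vadd_vsub]
  refine ⟨y +ᵥ p, ?_, hangle⟩
  rw [Set.insert_comm, collinear_iff_eq_or_eq_or_sin_eq_zero, hangle]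
  simp only [hqp, hsp, (Real.sin_pos_of_mem_Ioo hθ).ne', or_self, not_false_eq_true]

end Angle

theorem not_collinear_map {k V₁ V₂ P₁ P₂ : Type*} [DivisionRing k] [AddCommGroup V₁] [Module k V₁]
    [AddTorsor V₁ P₁] [AddCommGroup V₂] [Module k V₂] [AddTorsor V₂ P₂] {f : P₁ →ᵃ[k] P₂}
    (hf : Function.Injective f) {p q s : P₁} (h : ¬ Collinear k {p, q, s}) :
    ¬ Collinear k {f p, f q, f s} := by
  rw [← affineIndependent_iff_not_collinear_set] at h ⊢
  convert! h.map' f hf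
  ext i
  fin_cases i <;> rfl

section Parallelogram

variable {E : Type*} [AddCommGroup E] [Module ℝ E]

/-- The solid parallelogram with sides `PQ` and `PS`; its vertex opposite to `P` is
`Q + (S - P)`. -/
def parallelogram (P Q S : E) : Set E :=
  convexHull ℝ {P, Q, Q + (S - P), S}

theorem convexHull_triangle_subset_parallelogram (P Q S : E) :
    convexHull ℝ {P, Q, S} ⊆ parallelogram P Q S :=
  convexHull_mono (by grind)

theorem image_parallelogram {F : Type*} [AddCommGroup F] [Module ℝ F] (f : E →ᵃ[ℝ] F) (P Q S : E) :
    f '' parallelogram P Q S = parallelogram (f P) (f Q) (f S) := by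
  have hopp : f (Q + (S - P)) = f Q + (f S - f P) := by
    rw [add_comm, ← vadd_eq_add, f.map_vadd, ← vsub_eq_sub, f.linearMap_vsub, vadd_eq_add,
      vsub_eq_sub, add_comm]
  rw [parallelogram, f.image_convexHull]
  simp only [Set.image_insert_eq, Set.image_singleton, hopp, parallelogram]

end Parallelogram

section Area

variable {E : Type*} [NormedAddCommGroup E] [NormedSpace ℝ E] [MeasurableSpace E] (μ : Measure E)

theorem measure_convexHull_ne_top_of_finite [IsFiniteMeasureOnCompacts μ] {s : Set E}
    (hs : s.Finite) : μ (convexHull ℝ s) ≠ ∞ :=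
  (hs.isCompact_convexHull ℝ).measure_ne_top

theorem measure_convexHull_triangle_pos [Fact (finrank ℝ E = 2)] [μ.IsOpenPosMeasure] {A B C : E}
    (h : ¬ Collinear ℝ {A, B, C}) : 0 < μ (convexHull ℝ {A, B, C}) := by
  have : FiniteDimensional ℝ E := .of_fact_finrank_eq_two
  have hspan : affineSpan ℝ (Set.range ![A, B, C]) = ⊤ := by
    have hind : AffineIndependent ℝ ![A, B, C] := affineIndependent_iff_not_collinear_set.mpr h
    rw [hind.affineSpan_eq_top_iff_card_eq_finrank_add_one, Fintype.card_fin,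
      Fact.out (p := finrank ℝ E = 2)]
  rw [Matrix.range_cons, Matrix.range_cons_cons_empty, Set.singleton_union] at hspan
  exact μ.measure_pos_of_nonempty_interior
    (interior_convexHull_nonempty_iff_affineSpan_eq_top.mpr hspan)

variable [BorelSpace E] [μ.IsAddHaarMeasure]

theorem exists_measure_image_homothety_eq [FiniteDimensional ℝ E] [Nontrivial E] (x : E) {s : Set E}
    (hs₀ : μ s ≠ 0) (hs : μ s ≠ ∞) {a : ℝ≥0∞} (ha₀ : a ≠ 0) (ha : a ≠ ∞) :
    ∃ r : ℝ, 0 < r ∧ μ (homothety x r '' s) = a := by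
  have hq : 0 < (a / μ s).toReal :=
    ENNReal.toReal_pos (ENNReal.div_ne_zero.mpr ⟨ha₀, hs⟩) (ENNReal.div_ne_top ha hs₀)
  refine ⟨(a / μ s).toReal ^ ((finrank ℝ E : ℝ)⁻¹), by positivity, ?_⟩
  rw [μ.addHaar_image_homothety, Real.rpow_inv_natCast_pow hq.le Module.finrank_pos.ne',
    abs_of_pos hq, ENNReal.ofReal_toReal (ENNReal.div_ne_top ha hs₀),
    ENNReal.div_mul_cancel hs₀ hs]

theorem exists_measure_parallelogram_homothety_eq [Fact (finrank ℝ E = 2)] {P Q S : E}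
    (h : ¬ Collinear ℝ {P, Q, S}) {a : ℝ≥0∞} (ha₀ : a ≠ 0) (ha : a ≠ ∞) :
    ∃ r : ℝ, 0 < r ∧ μ (parallelogram P (homothety P r Q) (homothety P r S)) = a := by
  have : FiniteDimensional ℝ E := .of_fact_finrank_eq_two
  have : Nontrivial E := ⟨P, Q, ne₁₂_of_not_collinear h⟩
  have hpos : 0 < μ (parallelogram P Q S) :=
    (measure_convexHull_triangle_pos μ h).trans_le
      (measure_mono (convexHull_triangle_subset_parallelogram P Q S))
  have hfin : μ (parallelogram P Q S) ≠ ∞ :=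
    measure_convexHull_ne_top_of_finite μ (Set.toFinite _)
  simpa only [image_parallelogram, homothety_apply_same] using
    exists_measure_image_homothety_eq μ P hpos.ne' hfin ha₀ ha

end Area

theorem euclid_I_42_general {E : Type*} [NormedAddCommGroup E] [InnerProductSpace ℝ E]
    [Fact (finrank ℝ E = 2)] [MeasurableSpace E] [BorelSpace E] (μ : Measure E)
    [μ.IsAddHaarMeasure] (P : E) {a : ℝ≥0∞} (ha₀ : a ≠ 0) (ha : a ≠ ∞) {θ : ℝ}
    (hθ : θ ∈ Set.Ioo 0 Real.pi) :
    ∃ Q S : E, ¬ Collinear ℝ {P, Q, S} ∧ ∠ Q P S = θ ∧ μ (parallelogram P Q S) = a := by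
  have hdim : 1 < finrank ℝ E := by simp [Fact.out (p := finrank ℝ E = 2)]
  have : Nontrivial E := Module.nontrivial_of_finrank_pos (zero_lt_one.trans hdim)
  obtain ⟨Q, hQP⟩ := exists_ne P
  obtain ⟨S, hPQS, hangle⟩ :=
    exists_not_collinear_angle_eq (Module.one_lt_rank_of_one_lt_finrank hdim) hQP hθ
  obtain ⟨r, hr, harea⟩ := exists_measure_parallelogram_homothety_eq μ hPQS ha₀ ha
  refine ⟨homothety P r Q, homothety P r S, ?_, ?_, harea⟩
  · simpa only [homothety_apply_same] using not_collinear_map (homothety_injective P hr.ne') hPQS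
  · simpa only [homothety_apply_same, hangle] using angle_homothety P Q P S hr.ne'

theorem euclid_I_42 (A B C : EuclideanSpace ℝ (Fin 2))
    (hnc : ¬ Collinear ℝ ({A, B, C} : Set (EuclideanSpace ℝ (Fin 2))))
    (θ : ℝ) (hθ0 : 0 < θ) (hθπ : θ < Real.pi) :
    ∃ P Q S : EuclideanSpace ℝ (Fin 2),
      ¬ Collinear ℝ ({P, Q, S} : Set (EuclideanSpace ℝ (Fin 2))) ∧
      ∠ Q P S = θ ∧
      volume (convexHull ℝ ({P, Q, Q + (S - P), S} : Set (EuclideanSpace ℝ (Fin 2)))) =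
        volume (convexHull ℝ ({A, B, C} : Set (EuclideanSpace ℝ (Fin 2)))) := by
  have : Fact (finrank ℝ (EuclideanSpace ℝ (Fin 2)) = 2) := ⟨finrank_euclideanSpace_fin⟩
  exact ⟨0, euclid_I_42_general volume 0 (measure_convexHull_triangle_pos volume hnc).ne'
    (measure_convexHull_ne_top_of_finite volume (Set.toFinite _)) ⟨hθ0, hθπ⟩⟩
end
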